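/- Let r≤s be positive integers. If the admissible 6-tuple f is a trap of type (r,s), then σ(f) is also a trap of type (r,s). -/

import Mathlib

/-!
Common setup: 6-tuples, the coloured graph Γ(f), conditions (I)–(VI),
the maps ψ₁, ψ₂, ψ₃, σ, equivalences, traps, canonical/minimal/root tuples.
-/

namespace GMN

/-- A 6-tuple `(h₀,h₁,h₂;q₀,q₁,q₂)` of integers. -/
structure Tuple where
  h0 : ℤ
  h1 : ℤ
  h2 : ℤ
  q0 : ℤ
  q1 : ℤ
  q2 : ℤ

namespace Tuple

/-- The `h`-components indexed by `ℤ₃`. -/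
def h (f : Tuple) : ZMod 3 → ℤ := fun i => if i = 0 then f.h0 else if i = 1 then f.h1 else f.h2

/-- The `q`-components indexed by `ℤ₃`. -/
def q (f : Tuple) : ZMod 3 → ℤ := fun i => if i = 0 then f.q0 else if i = 1 then f.q1 else f.q2

/-- `2lᵢ = h_{i-1} + hᵢ`. -/
def twol (f : Tuple) (i : ZMod 3) : ℤ := f.h (i - 1) + f.h i

end Tuple

/-- Condition (I): all `hᵢ` positive. -/
def CondI (f : Tuple) : Prop := ∀ i, 0 < f.h i

/-- Condition (II): all `hᵢ` of the same parity. -/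
def CondII (f : Tuple) : Prop := ∀ i j, f.h i % 2 = f.h j % 2

/-- Condition (III): `0 ≤ qᵢ < 2lᵢ`. -/
def CondIII (f : Tuple) : Prop := ∀ i, 0 ≤ f.q i ∧ f.q i < f.twol i

/-- Condition (IV): all `qᵢ` of the same parity. -/
def CondIV (f : Tuple) : Prop := ∀ i j, f.q i % 2 = f.q j % 2

/-- Conditions (I)–(IV) together. -/
def CondsI_IV (f : Tuple) : Prop := CondI f ∧ CondII f ∧ CondIII f ∧ CondIV f

/-- Condition (V): `hᵢ + qᵢ` odd. -/
def CondV (f : Tuple) : Prop := ∀ i, (f.h i + f.q i) % 2 = 1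

/-- The vertex set `V(f) = ⋃ᵢ {i} × ℤ_{2lᵢ}`, with second coordinates as least
nonnegative residues. -/
def Vtx (f : Tuple) : Set (ZMod 3 × ℤ) := {p | 0 ≤ p.2 ∧ p.2 < f.twol p.1}

/-- `ι₀(i,j) = (i, j + (−1)^j)`, second coordinate mod `2lᵢ`. -/
def iota0 (f : Tuple) (p : ZMod 3 × ℤ) : ZMod 3 × ℤ :=
  (p.1, (if p.2 % 2 = 0 then p.2 + 1 else p.2 - 1) % f.twol p.1)

/-- `ι₁(i,j) = (i, j − (−1)^j)`, second coordinate mod `2lᵢ`. -/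
def iota1 (f : Tuple) (p : ZMod 3 × ℤ) : ZMod 3 × ℤ :=
  (p.1, (if p.2 % 2 = 0 then p.2 - 1 else p.2 + 1) % f.twol p.1)

/-- `ι₂(i,j) = (i+1, −j−1)` if `0 ≤ j ≤ hᵢ−1`, and `(i−1, 2lᵢ−j−1)` if `hᵢ ≤ j ≤ 2lᵢ−1`. -/
def iota2 (f : Tuple) (p : ZMod 3 × ℤ) : ZMod 3 × ℤ :=
  if p.2 < f.h p.1 then (p.1 + 1, (-p.2 - 1) % f.twol (p.1 + 1))
  else (p.1 - 1, (f.twol p.1 - p.2 - 1) % f.twol (p.1 - 1))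

/-- `ρ(i,j) = (i, j + qᵢ)`. -/
def rho (f : Tuple) (p : ZMod 3 × ℤ) : ZMod 3 × ℤ :=
  (p.1, (p.2 + f.q p.1) % f.twol p.1)

/-- `ρ⁻¹(i,j) = (i, j − qᵢ)`. -/
def rhoInv (f : Tuple) (p : ZMod 3 × ℤ) : ZMod 3 × ℤ :=
  (p.1, (p.2 - f.q p.1) % f.twol p.1)

/-- `ι₃ = ρ ∘ ι₂ ∘ ρ⁻¹`. -/
def iota3 (f : Tuple) : ZMod 3 × ℤ → ZMod 3 × ℤ :=
  rho f ∘ iota2 f ∘ rhoInv f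

/-- The four involutions of `Γ(f)`, indexed by the colour `c ∈ {0,1,2,3}`. -/
def iota (f : Tuple) : Fin 4 → ZMod 3 × ℤ → ZMod 3 × ℤ
  | 0 => iota0 f
  | 1 => iota1 f
  | 2 => iota2 f
  | 3 => iota3 f

/-- One step along an edge of `Γ(f)` whose colour lies in `S`, within `V(f)`. -/
def Step (f : Tuple) (S : Set (Fin 4)) (a b : ZMod 3 × ℤ) : Prop :=
  a ∈ Vtx f ∧ b ∈ Vtx f ∧ ∃ c ∈ S, b = iota f c a

/-- The orbit relation on `V(f)` of the subgroup generated by the involutions with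
colours in `S` (the `S`-residue relation). -/
def OrbRel (f : Tuple) (S : Set (Fin 4)) : ZMod 3 × ℤ → ZMod 3 × ℤ → Prop :=
  Relation.EqvGen (Step f S)

/-- The subgroup generated by the colours in `S` has exactly three orbits on `V(f)`. -/
def ThreeOrbits (f : Tuple) (S : Set (Fin 4)) : Prop :=
  ∃ a b c, a ∈ Vtx f ∧ b ∈ Vtx f ∧ c ∈ Vtx f ∧
    ¬ OrbRel f S a b ∧ ¬ OrbRel f S a c ∧ ¬ OrbRel f S b c ∧
    ∀ v ∈ Vtx f, OrbRel f S a v ∨ OrbRel f S b v ∨ OrbRel f S c v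

/-- Admissibility: conditions (I)–(IV), (V), and (VI) (three `{2,3}`-residues). -/
def Admissible (f : Tuple) : Prop :=
  CondsI_IV f ∧ CondV f ∧ ThreeOrbits f {2, 3}

/-- `ψ₁(h₀,h₁,h₂;q₀,q₁,q₂) = (h₁,h₂,h₀;q₁,q₂,q₀)`. -/
def psi1 (f : Tuple) : Tuple := ⟨f.h1, f.h2, f.h0, f.q1, f.q2, f.q0⟩

/-- `ψ₂(h₀,h₁,h₂;q₀,q₁,q₂) = (h₂,h₁,h₀;q₀,q₂,q₁)`. -/
def psi2 (f : Tuple) : Tuple := ⟨f.h2, f.h1, f.h0, f.q0, f.q2, f.q1⟩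

/-- `ψ₃(h₀,h₁,h₂;q₀,q₁,q₂) = (h₀,h₁,h₂;−q₀,−q₁,−q₂)`, the `q`-entries reduced to their
least nonnegative residues mod the respective `2lᵢ`. -/
def psi3 (f : Tuple) : Tuple :=
  ⟨f.h0, f.h1, f.h2,
    (-f.q0) % (f.h2 + f.h0), (-f.q1) % (f.h0 + f.h1), (-f.q2) % (f.h1 + f.h2)⟩

/-- The 2-symmetric transformation `σ`, with the `q′`-entries reduced to their least
nonnegative residues mod the respective `2lᵢ′ = h′_{i−1} + h′ᵢ`. -/
def sigma (f : Tuple) : Tuple :=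
  if f.q0 = 0 then f
  else if f.q0 < f.h0 ∧ f.q0 < f.h2 then
    ⟨f.h0 + f.h1 - f.q0, f.q0, f.h2 + f.h1 - f.q0,
      (f.h0 + f.h1 + f.h2 - 2 * f.q0) % ((f.h2 + f.h1 - f.q0) + (f.h0 + f.h1 - f.q0)),
      (f.q0 + f.q1 + f.h1) % ((f.h0 + f.h1 - f.q0) + f.q0),
      (f.q0 + f.q2 + f.h1) % (f.q0 + (f.h2 + f.h1 - f.q0))⟩
  else if f.h0 < f.q0 ∧ f.h2 < f.q0 then
    ⟨f.q0 + f.h1 - f.h2, f.h0 + f.h2 - f.q0, f.q0 + f.h1 - f.h0,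
      f.h1 % ((f.q0 + f.h1 - f.h0) + (f.q0 + f.h1 - f.h2)),
      (f.q0 + f.q1 - f.h2) % ((f.q0 + f.h1 - f.h2) + (f.h0 + f.h2 - f.q0)),
      (f.q0 + f.q2 - f.h0) % ((f.h0 + f.h2 - f.q0) + (f.q0 + f.h1 - f.h0))⟩
  else if f.q0 < f.h2 then
    ⟨f.h1, f.h0, f.h1 + f.h2 - f.h0,
      (f.h1 + f.h2 - f.q0) % ((f.h1 + f.h2 - f.h0) + f.h1),
      f.q1 % (f.h1 + f.h0),
      (2 * f.q0 + f.q2 + f.h1 - f.h0) % (f.h0 + (f.h1 + f.h2 - f.h0))⟩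
  else
    ⟨f.h1 + f.h0 - f.h2, f.h2, f.h1,
      (f.h1 + f.h0 - f.q0) % (f.h1 + (f.h1 + f.h0 - f.h2)),
      (2 * f.q0 + f.q1 + f.h1 - f.h2) % ((f.h1 + f.h0 - f.h2) + f.h2),
      f.q2 % (f.h2 + f.h1)⟩

/-- The complexity `ν(f) = h₀ + h₁ + h₂`. -/
def nu (f : Tuple) : ℤ := f.h0 + f.h1 + f.h2

/-- `δ(f) = ν(σ(f)) − ν(f)`. -/
def delta (f : Tuple) : ℤ := nu (sigma f) - nu f

/-- One step of the action of a generator of `H` on admissible 6-tuples. -/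
def HStep (a b : Tuple) : Prop :=
  Admissible a ∧ Admissible b ∧ (b = psi1 a ∨ b = psi2 a ∨ b = psi3 a)

/-- `H`-equivalence: the orbit relation of `H = ⟨ψ₁,ψ₂,ψ₃⟩` on `ℱ`. -/
def HEquiv : Tuple → Tuple → Prop := Relation.EqvGen HStep

/-- One step of the action of a generator of `H′` on admissible 6-tuples. -/
def H'Step (a b : Tuple) : Prop :=
  Admissible a ∧ Admissible b ∧ (b = psi2 a ∨ b = psi3 a)

/-- `H′`-equivalence: the orbit relation of `H′ = ⟨ψ₂,ψ₃⟩` on `ℱ`. -/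
def H'Equiv : Tuple → Tuple → Prop := Relation.EqvGen H'Step

/-- One step of the action of a generator of `G` on admissible 6-tuples. -/
def GStep (a b : Tuple) : Prop :=
  Admissible a ∧ Admissible b ∧ (b = psi1 a ∨ b = psi2 a ∨ b = psi3 a ∨ b = sigma a)

/-- `G`-equivalence: the orbit relation of `G = ⟨ψ₁,ψ₂,ψ₃,σ⟩` on `ℱ`. -/
def GEquiv : Tuple → Tuple → Prop := Relation.EqvGen GStep

/-- Membership in the set `{0, r+1, r+2, …, s−1}`. -/
def inT (r s x : ℤ) : Prop := x = 0 ∨ (r < x ∧ x < s)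

/-- A trap of type `(r,s)`: `H`-equivalent to an admissible `(r,r,s;q₀,0,q₂)` with
`q₀+k(q₀+q₂), q₂+k(q₀+q₂) ∈ {0,r+1,…,s−1} (mod r+s)` for all `k ≥ 0`. -/
def IsTrapOfType (r s : ℤ) (f : Tuple) : Prop :=
  ∃ g : Tuple, Admissible g ∧ HEquiv f g ∧
    g.h0 = r ∧ g.h1 = r ∧ g.h2 = s ∧ g.q1 = 0 ∧
    ∀ k : ℕ, inT r s ((g.q0 + (k : ℤ) * (g.q0 + g.q2)) % (r + s)) ∧
             inT r s ((g.q2 + (k : ℤ) * (g.q0 + g.q2)) % (r + s))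

/-- A trap: a trap of some type `(r,s)` with `0 < r ≤ s`. -/
def IsTrap (f : Tuple) : Prop := ∃ r s : ℤ, 0 < r ∧ r ≤ s ∧ IsTrapOfType r s f

/-- The canonical representative conditions (a)–(i) (together with admissibility). -/
def Canonical (f : Tuple) : Prop :=
  Admissible f ∧
  (f.h0 ≤ f.h1 ∧ f.h1 ≤ f.h2) ∧
  (2 * f.q0 ≤ f.h2 + f.h0) ∧
  ((f.q0 = 0 ∨ 2 * f.q0 = f.h2 + f.h0) → 2 * f.q1 ≤ f.h0 + f.h1) ∧
  ((f.q0 = 0 ∨ 2 * f.q0 = f.h2 + f.h0) → (f.q1 = 0 ∨ 2 * f.q1 = f.h0 + f.h1) →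
    2 * f.q2 ≤ f.h1 + f.h2) ∧
  (f.h0 = f.h1 → f.q0 ≤ f.q2 ∧ f.q2 ≤ (-f.q0) % (f.h2 + f.h0)) ∧
  (f.h0 = f.h1 → (f.q2 = f.q0 ∨ f.q2 = (-f.q0) % (f.h2 + f.h0)) → f.q1 ≤ f.h1) ∧
  (f.h1 = f.h2 → f.q0 ≤ f.q1 ∧ f.q1 ≤ (-f.q0) % (f.h2 + f.h0)) ∧
  (f.h1 = f.h2 → (f.q1 = f.q0 ∨ f.q1 = (-f.q0) % (f.h2 + f.h0)) → f.q2 ≤ f.h2) ∧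
  (f.h0 = f.h1 ∧ f.h1 = f.h2 → f.q1 ≤ f.q2)

/-- A canonical 6-tuple is minimal if its complexity is minimal in its `G`-orbit. -/
def Minimal (f : Tuple) : Prop :=
  Canonical f ∧ ∀ g, GEquiv f g → nu f ≤ nu g

/-- A canonical 6-tuple is a root if every `G`-equivalent but not `H`-equivalent
6-tuple has strictly larger complexity. -/
def Root (f : Tuple) : Prop :=
  Canonical f ∧ ∀ g, GEquiv f g → ¬ HEquiv f g → nu f < nu g

/-- A colour-preserving isomorphism between `Γ(f)` and `Γ(f′)`. -/
def CPIso (f f' : Tuple) : Prop :=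
  ∃ φ : ZMod 3 × ℤ → ZMod 3 × ℤ, Set.BijOn φ (Vtx f) (Vtx f') ∧
    ∀ c : Fin 4, ∀ v ∈ Vtx f, φ (iota f c v) = iota f' c (φ v)

/-- The set of admissible 6-tuples, as a type. -/
abbrev AdmTuple := {f : Tuple // Admissible f}

/-!
Write `n = r + s`. In `(r, r, s; a, 0, b)` with `r ≤ a ≤ s`, the cycle `1` can be contracted, and
the `{2, 3}`-orbits become the cycles on `ℤ/n` of the map that exchanges the blocks `[0, r)` and
`[a, a + r)` and then subtracts `a + b`. On such a tuple with `a ≠ 0`, `σ` replaces `(a, b)` by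
`(−a, 2a + b)` mod `n`. This fixes `a + b` and conjugates the block exchange by the translation by
`−a`, so condition (VI) is preserved. The trap condition says that the coset `a + ℤ(a + b)` reduces
into `{0, r + 1, …, s − 1}`; this set is invariant under negation mod `n`, so the condition is
preserved too. The other tuples in the `H`-orbit of a trap tuple have `q₀ = 0`, and are fixed by
`σ`, or are images under `ψ₂`, which commutes with `σ`.
-/

theorem forall_zmod_three {p : ZMod 3 → Prop} : (∀ i, p i) ↔ p 0 ∧ p 1 ∧ p 2 :=
  ⟨fun h => ⟨h 0, h 1, h 2⟩, fun ⟨h0, h1, h2⟩ i => by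
    obtain rfl | rfl | rfl : i = 0 ∨ i = 1 ∨ i = 2 := by revert i; decide
    exacts [h0, h1, h2]⟩

section Orbits

variable {f f' : Tuple} {i : ZMod 3} {j : ℤ} {v w : ZMod 3 × ℤ}

theorem CondI.twol_pos (hI : CondI f) (i : ZMod 3) : 0 < f.twol i :=
  add_pos (hI _) (hI _)

theorem CondI.emod_mem_vtx (hI : CondI f) (i : ZMod 3) (j : ℤ) : (i, j % f.twol i) ∈ Vtx f :=
  ⟨Int.emod_nonneg _ (hI.twol_pos i).ne', Int.emod_lt_of_pos _ (hI.twol_pos i)⟩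

theorem CondI.iota2_mem_vtx (hI : CondI f) (v : ZMod 3 × ℤ) : iota2 f v ∈ Vtx f := by
  rw [iota2]
  split_ifs
  · exact hI.emod_mem_vtx _ _
  · exact hI.emod_mem_vtx _ _

theorem rho_rhoInv (hv : v ∈ Vtx f) : rho f (rhoInv f v) = v := by
  simp only [rho, rhoInv, Int.emod_add_emod, sub_add_cancel, Int.emod_eq_of_lt hv.1 hv.2]

theorem rhoInv_rho (hv : v ∈ Vtx f) : rhoInv f (rho f v) = v := by
  simp only [rho, rhoInv, Int.emod_sub_emod, add_sub_cancel_right, Int.emod_eq_of_lt hv.1 hv.2]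

theorem iota2_of_lt (hI : CondI f) (hj₀ : 0 ≤ j) (hj : j < f.h i) :
    iota2 f (i, j) = (i + 1, f.twol (i + 1) - 1 - j) := by
  have htwol : f.twol (i + 1) = f.h i + f.h (i + 1) := by rw [Tuple.twol, add_sub_cancel_right]
  have hpos := hI (i + 1)
  simp only [iota2, if_pos hj, Prod.mk.injEq, true_and]
  rw [← Int.add_emod_right, Int.emod_eq_of_lt] <;> omega

theorem iota2_of_ge (hI : CondI f) (hj : f.h i ≤ j) (hj' : j < f.twol i) :
    iota2 f (i, j) = (i - 1, f.twol i - 1 - j) := by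
  have htwol : f.twol i = f.h (i - 1) + f.h i := rfl
  have htwol' : f.twol (i - 1) = f.h (i - 1 - 1) + f.h (i - 1) := rfl
  have hpos := hI (i - 1 - 1)
  simp only [iota2, if_neg hj.not_gt, Prod.mk.injEq, true_and]
  rw [Int.emod_eq_of_lt] <;> omega

theorem orbRel_iota2 (hI : CondI f) (hv : v ∈ Vtx f) : OrbRel f {2, 3} v (iota2 f v) :=
  .rel _ _ ⟨hv, hI.iota2_mem_vtx v, 2, by simp, rfl⟩

theorem orbRel_rho_iota2 (hI : CondI f) (hv : v ∈ Vtx f) :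
    OrbRel f {2, 3} (rho f v) (rho f (iota2 f v)) := by
  refine .rel _ _ ⟨hI.emod_mem_vtx _ _, hI.emod_mem_vtx _ _, 3, by simp, ?_⟩
  change rho f (iota2 f v) = rho f (iota2 f (rhoInv f (rho f v)))
  rw [rhoInv_rho hv]

theorem mem_vtx_of_lt (hI : CondI f) (hj₀ : 0 ≤ j) (hj : j < f.h i) : (i, j) ∈ Vtx f :=
  ⟨hj₀, hj.trans (lt_add_of_pos_left _ (hI _))⟩

theorem orbRel_edge (hI : CondI f) (hj₀ : 0 ≤ j) (hj : j < f.h i) :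
    OrbRel f {2, 3} (i, j) (i + 1, f.twol (i + 1) - 1 - j) := by
  simpa only [iota2_of_lt hI hj₀ hj] using orbRel_iota2 hI (mem_vtx_of_lt hI hj₀ hj)

theorem orbRel_rho_edge (hI : CondI f) (hj₀ : 0 ≤ j) (hj : j < f.h i) :
    OrbRel f {2, 3} (rho f (i, j)) (rho f (i + 1, f.twol (i + 1) - 1 - j)) := by
  simpa only [iota2_of_lt hI hj₀ hj] using orbRel_rho_iota2 hI (mem_vtx_of_lt hI hj₀ hj)

theorem forall_iota2_of_edges {Q : ZMod 3 × ℤ → ZMod 3 × ℤ → Prop} (hI : CondI f)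
    (hsymm : ∀ {v w}, Q v w → Q w v)
    (hQ : ∀ i j, 0 ≤ j → j < f.h i → Q (i, j) (i + 1, f.twol (i + 1) - 1 - j)) :
    ∀ v ∈ Vtx f, Q v (iota2 f v) := by
  rintro ⟨i, j⟩ ⟨hj₀, hj₁⟩
  simp only at hj₀ hj₁
  by_cases hj : j < f.h i
  · rw [iota2_of_lt hI hj₀ hj]
    exact hQ i j hj₀ hj
  · have htwol : f.twol i = f.h (i - 1) + f.h i := rfl
    rw [iota2_of_ge hI (by omega) hj₁]
    have hedge := hQ (i - 1) (f.twol i - 1 - j) (by omega) (by omega)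
    rw [sub_add_cancel, sub_sub_cancel] at hedge
    exact hsymm hedge

/- Every `ι₂`-edge joins some `(i, j)` with `0 ≤ j < hᵢ` to the cycle `i + 1`, and the `ι₃`-edges
are the `ρ`-images of the `ι₂`-edges. -/
theorem OrbRel.of_edges {E : ZMod 3 × ℤ → ZMod 3 × ℤ → Prop} (hI : CondI f) (hE : Equivalence E)
    (h₂ : ∀ i j, 0 ≤ j → j < f.h i → E (i, j) (i + 1, f.twol (i + 1) - 1 - j))
    (h₃ : ∀ i j, 0 ≤ j → j < f.h i →
      E (rho f (i, j)) (rho f (i + 1, f.twol (i + 1) - 1 - j)))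
    (hvw : OrbRel f {2, 3} v w) : E v w := by
  refine hE.eqvGen_iff.1 (Relation.EqvGen.mono ?_ _ _ hvw)
  rintro x _ ⟨hx, -, c, rfl | rfl, rfl⟩
  · exact forall_iota2_of_edges (Q := E) hI hE.symm h₂ x hx
  · have := forall_iota2_of_edges (Q := fun v w => E (rho f v) (rho f w)) hI hE.symm h₃
      (rhoInv f x) (hI.emod_mem_vtx _ _)
    rwa [rho_rhoInv hx] at this

theorem ThreeOrbits.map {S S' : Set (Fin 4)} (F : ZMod 3 × ℤ → ZMod 3 × ℤ)
    (hF : ∀ v ∈ Vtx f, F v ∈ Vtx f')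
    (hreflect : ∀ v ∈ Vtx f, ∀ w ∈ Vtx f, OrbRel f' S' (F v) (F w) → OrbRel f S v w)
    (hmap : ∀ v ∈ Vtx f, ∀ w ∈ Vtx f, OrbRel f S v w → OrbRel f' S' (F v) (F w))
    (hsurj : ∀ w ∈ Vtx f', ∃ v ∈ Vtx f, OrbRel f' S' (F v) w) (h : ThreeOrbits f S) :
    ThreeOrbits f' S' := by
  obtain ⟨a, b, c, ha, hb, hc, hab, hac, hbc, hall⟩ := h
  refine ⟨F a, F b, F c, hF a ha, hF b hb, hF c hc, fun h => hab (hreflect a ha b hb h),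
    fun h => hac (hreflect a ha c hc h), fun h => hbc (hreflect b hb c hc h), fun w hw => ?_⟩
  obtain ⟨v, hv, hvw⟩ := hsurj w hw
  exact (hall v hv).imp (fun h => (hmap a ha v hv h).trans _ _ _ hvw)
    (Or.imp (fun h => (hmap b hb v hv h).trans _ _ _ hvw)
      fun h => (hmap c hc v hv h).trans _ _ _ hvw)

end Orbits

theorem condsI_IV_and_condV_iff (f : Tuple) : CondsI_IV f ∧ CondV f ↔
    (0 < f.h0 ∧ 0 < f.h1 ∧ 0 < f.h2) ∧ (f.h0 % 2 = f.h1 % 2 ∧ f.h0 % 2 = f.h2 % 2) ∧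
    ((0 ≤ f.q0 ∧ f.q0 < f.h2 + f.h0) ∧ (0 ≤ f.q1 ∧ f.q1 < f.h0 + f.h1) ∧
      (0 ≤ f.q2 ∧ f.q2 < f.h1 + f.h2)) ∧
    (f.q0 % 2 = f.q1 % 2 ∧ f.q0 % 2 = f.q2 % 2) ∧ (f.h0 + f.q0) % 2 = 1 := by
  constructor
  · rintro ⟨⟨hI, hII, hIII, hIV⟩, hV⟩
    exact ⟨⟨hI 0, hI 1, hI 2⟩, ⟨hII 0 1, hII 0 2⟩, ⟨hIII 0, hIII 1, hIII 2⟩,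
      ⟨hIV 0 1, hIV 0 2⟩, hV 0⟩
  · rintro ⟨hI, ⟨h01, h02⟩, hIII, ⟨q01, q02⟩, hV⟩
    have hh : ∀ i, f.h i % 2 = f.h0 % 2 := forall_zmod_three.2 ⟨rfl, h01.symm, h02.symm⟩
    have hq : ∀ i, f.q i % 2 = f.q0 % 2 := forall_zmod_three.2 ⟨rfl, q01.symm, q02.symm⟩
    refine ⟨⟨forall_zmod_three.2 hI, fun i j => (hh i).trans (hh j).symm,
      forall_zmod_three.2 hIII, fun i j => (hq i).trans (hq j).symm⟩, fun i => ?_⟩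
    rw [Int.add_emod, hh, hq, ← Int.add_emod, hV]

section Psi2

variable {f : Tuple} {v w : ZMod 3 × ℤ}

theorem psi2_psi2 (f : Tuple) : psi2 (psi2 f) = f := rfl

theorem twol_psi2 (f : Tuple) (i : ZMod 3) : (psi2 f).twol (-i) = f.twol i :=
  (forall_zmod_three (p := fun i => (psi2 f).twol (-i) = f.twol i)).2
    ⟨add_comm _ _, add_comm _ _, add_comm _ _⟩ i

theorem h_psi2 (f : Tuple) (i : ZMod 3) : (psi2 f).h (-i) = f.h (i - 1) :=
  (forall_zmod_three (p := fun i => (psi2 f).h (-i) = f.h (i - 1))).2 ⟨rfl, rfl, rfl⟩ i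

theorem q_psi2 (f : Tuple) (i : ZMod 3) : (psi2 f).q (-i) = f.q i :=
  (forall_zmod_three (p := fun i => (psi2 f).q (-i) = f.q i)).2 ⟨rfl, rfl, rfl⟩ i

theorem CondI.psi2 (hI : CondI f) : CondI (psi2 f) :=
  forall_zmod_three.2 ⟨hI 2, hI 1, hI 0⟩

/-- The bijection `(i, j) ↦ (−i, j − hᵢ)` from `V(f)` to `V(ψ₂ f)`, an isomorphism of the
subgraphs with colours `2` and `3`. -/
def psi2Vtx (f : Tuple) (v : ZMod 3 × ℤ) : ZMod 3 × ℤ := (-v.1, (v.2 - f.h v.1) % f.twol v.1)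

theorem psi2Vtx_mem_vtx (hI : CondI f) (v : ZMod 3 × ℤ) : psi2Vtx f v ∈ Vtx (psi2 f) := by
  simpa only [psi2Vtx, twol_psi2] using hI.psi2.emod_mem_vtx (-v.1) (v.2 - f.h v.1)

theorem psi2Vtx_psi2Vtx (hv : v ∈ Vtx f) : psi2Vtx (psi2 f) (psi2Vtx f v) = v := by
  have htwol : v.2 - f.h v.1 - f.h (v.1 - 1) = v.2 - f.twol v.1 := by rw [Tuple.twol]; ring
  simp only [psi2Vtx, h_psi2, twol_psi2, neg_neg, Int.emod_sub_emod, htwol, Int.sub_emod_right,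
    Int.emod_eq_of_lt hv.1 hv.2]

theorem psi2Vtx_rho (f : Tuple) (v : ZMod 3 × ℤ) :
    psi2Vtx f (rho f v) = rho (psi2 f) (psi2Vtx f v) := by
  simp only [psi2Vtx, rho, q_psi2, twol_psi2, Int.emod_add_emod, Int.emod_sub_emod]
  rw [sub_add_eq_add_sub]

theorem psi2Vtx_of_lt (hI : CondI f) {i : ZMod 3} {j : ℤ} (hj₀ : 0 ≤ j) (hj : j < f.h i) :
    psi2Vtx f (i, j) =
      (-(i + 1) + 1, (psi2 f).twol (-(i + 1) + 1) - 1 - (f.h i - 1 - j)) := by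
  have hi : -(i + 1) + 1 = -i := by ring
  have htwol : f.twol i = f.h (i - 1) + f.h i := rfl
  have hpos := hI (i - 1)
  simp only [hi, psi2Vtx, twol_psi2, Prod.mk.injEq, true_and]
  rw [← Int.add_emod_right, Int.emod_eq_of_lt] <;> omega

theorem psi2Vtx_edge_end (hI : CondI f) {i : ZMod 3} {j : ℤ} (hj₀ : 0 ≤ j) (hj : j < f.h i) :
    psi2Vtx f (i + 1, f.twol (i + 1) - 1 - j) = (-(i + 1), f.h i - 1 - j) := by
  have htwol : f.twol (i + 1) = f.h i + f.h (i + 1) := by rw [Tuple.twol, add_sub_cancel_right]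
  have hpos := hI (i + 1)
  simp only [psi2Vtx, Prod.mk.injEq, true_and]
  rw [Int.emod_eq_of_lt] <;> omega

theorem OrbRel.psi2 (hI : CondI f) (hvw : OrbRel f {2, 3} v w) :
    OrbRel (psi2 f) {2, 3} (psi2Vtx f v) (psi2Vtx f w) := by
  have hh (i : ZMod 3) : (GMN.psi2 f).h (-(i + 1)) = f.h i := by
    rw [h_psi2, add_sub_cancel_right]
  refine OrbRel.of_edges (E := fun v w => OrbRel (GMN.psi2 f) {2, 3} (psi2Vtx f v) (psi2Vtx f w))
    hI ((Relation.EqvGen.is_equivalence _).comap (psi2Vtx f)) (fun i j hj₀ hj => ?_)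
    (fun i j hj₀ hj => ?_) hvw
  · rw [psi2Vtx_of_lt hI hj₀ hj, psi2Vtx_edge_end hI hj₀ hj]
    exact (orbRel_edge hI.psi2 (by omega) (by rw [hh]; omega)).symm
  · rw [psi2Vtx_rho, psi2Vtx_rho, psi2Vtx_of_lt hI hj₀ hj, psi2Vtx_edge_end hI hj₀ hj]
    exact (orbRel_rho_edge hI.psi2 (by omega) (by rw [hh]; omega)).symm

theorem ThreeOrbits.psi2 (hI : CondI f) (h : ThreeOrbits f {2, 3}) :
    ThreeOrbits (psi2 f) {2, 3} := by
  refine h.map (psi2Vtx f) (fun v _ => psi2Vtx_mem_vtx hI v) (fun v hv w hw hvw => ?_)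
    (fun v _ w _ hvw => hvw.psi2 hI) (fun w hw => ⟨psi2Vtx (GMN.psi2 f) w,
      psi2Vtx_mem_vtx hI.psi2 w, ?_⟩)
  · simpa only [psi2_psi2, psi2Vtx_psi2Vtx hv, psi2Vtx_psi2Vtx hw] using OrbRel.psi2 hI.psi2 hvw
  · rw [show psi2Vtx f (psi2Vtx (GMN.psi2 f) w) = w from psi2Vtx_psi2Vtx hw]
    exact .refl _

theorem Admissible.psi2 (hf : Admissible f) : Admissible (psi2 f) := by
  have hc := (condsI_IV_and_condV_iff f).1 ⟨hf.1, hf.2.1⟩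
  have hc' : CondsI_IV (GMN.psi2 f) ∧ CondV (GMN.psi2 f) := by
    rw [condsI_IV_and_condV_iff]
    simp only [GMN.psi2]
    omega
  exact ⟨hc'.1, hc'.2, hf.2.2.psi2 hf.1.1⟩

end Psi2

section ModCycles

/-- The equivalence relation on representatives of `ℤ/n` generated by `x ∼ T x`; if `T` induces a
permutation of `ℤ/n`, its classes are the cycles of that permutation. -/
def ModCycleRel (n : ℤ) (T : ℤ → ℤ) : ℤ → ℤ → Prop := Relation.EqvGen fun x y => T x ≡ y [ZMOD n]

variable {n d x y : ℤ} {T T' : ℤ → ℤ}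

theorem ModCycleRel.equivalence (n : ℤ) (T : ℤ → ℤ) : Equivalence (ModCycleRel n T) :=
  Relation.EqvGen.is_equivalence _

theorem ModCycleRel.of_modEq (hT : ∀ x y, x ≡ y [ZMOD n] → T x ≡ T y [ZMOD n])
    (h : x ≡ y [ZMOD n]) : ModCycleRel n T x y :=
  .trans _ _ _ (.rel _ _ rfl) (.symm _ _ (.rel _ _ (hT y x h.symm)))

theorem ModCycleRel.sub_right (hT : ∀ x, T' (x - d) ≡ T x - d [ZMOD n]) (h : ModCycleRel n T x y) :
    ModCycleRel n T' (x - d) (y - d) :=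
  ((ModCycleRel.equivalence n T').comap (· - d)).eqvGen_iff.1 <|
    Relation.EqvGen.mono (fun x _ hxy => .rel _ _ ((hT x).trans (hxy.sub_right d))) _ _ h

theorem modCycleRel_sub_right_iff (hT : ∀ x, T' (x - d) ≡ T x - d [ZMOD n]) :
    ModCycleRel n T' (x - d) (y - d) ↔ ModCycleRel n T x y := by
  refine ⟨fun h => ?_, .sub_right hT⟩
  have hT' (x : ℤ) : T (x - -d) ≡ T' x - -d [ZMOD n] := by
    simpa only [sub_neg_eq_add, add_sub_cancel_right, sub_add_cancel] using
      ((hT (x + d)).symm.add_right d)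
  simpa only [sub_neg_eq_add, sub_add_cancel] using h.sub_right hT'

/-- The permutation of `ℤ/n` exchanging the blocks `[0, r)` and `[a, a + r)` by translation, on
representatives. -/
def blockSwap (r n a t : ℤ) : ℤ :=
  if t % n < r then t + a else if (t - a) % n < r then t - a else t

variable {r a t : ℤ}

theorem blockSwap_modEq (r a : ℤ) (h : x ≡ y [ZMOD n]) :
    blockSwap r n a x ≡ blockSwap r n a y [ZMOD n] := by
  have hxy : x % n = y % n := h
  have hxya : (x - a) % n = (y - a) % n := h.sub_right a
  simp only [blockSwap, hxy, hxya]
  split_ifs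
  exacts [h.add_right a, h.sub_right a, h]

theorem blockSwap_of_lt (h : t % n < r) : blockSwap r n a t = t + a := if_pos h

theorem blockSwap_of_le (h : r ≤ t % n) (ha : r ≤ (t - a) % n) : blockSwap r n a t = t := by
  rw [blockSwap, if_neg h.not_gt, if_neg ha.not_gt]

theorem le_add_emod (hr : r ≤ a) (ha : a + r ≤ n) (hn : 0 < n) (h : t % n < r) :
    r ≤ (t + a) % n := by
  have := Int.emod_nonneg t hn.ne'
  rw [← Int.emod_add_emod, Int.emod_eq_of_lt] <;> omega

theorem le_sub_emod (hr : r ≤ a) (ha : a + r ≤ n) (hn : 0 < n) (h : t % n < r) :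
    r ≤ (t - a) % n := by
  have hle := le_add_emod (a := n - a) (by omega) (by omega) hn h
  rwa [← add_sub_assoc, add_sub_right_comm, Int.add_emod_right] at hle

theorem blockSwap_of_sub_lt (hr : r ≤ a) (ha : a + r ≤ n) (hn : 0 < n) (h : (t - a) % n < r) :
    blockSwap r n a t = t - a := by
  have hle : r ≤ t % n := by simpa only [sub_add_cancel] using le_add_emod hr ha hn h
  rw [blockSwap, if_neg hle.not_gt, if_pos h]

theorem blockSwap_sub (hr : r ≤ a) (ha : a + r ≤ n) (hn : 0 < n) (t : ℤ) :
    blockSwap r n (n - a) (t - a) ≡ blockSwap r n a t - a [ZMOD n] := by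
  by_cases h : (t - a) % n < r
  · rw [blockSwap_of_lt h, blockSwap_of_sub_lt hr ha hn h]
    exact Int.modEq_iff_dvd.2 ⟨-1, by ring⟩
  have hsub : t - a - (n - a) ≡ t [ZMOD n] := Int.modEq_iff_dvd.2 ⟨1, by ring⟩
  by_cases h' : t % n < r
  · rw [blockSwap_of_lt h', blockSwap_of_sub_lt (by omega) (by omega) hn (hsub.symm ▸ h')]
    exact (hsub.trans (by rw [add_sub_cancel_right]))
  · rw [blockSwap_of_le (not_lt.1 h') (not_lt.1 h),
      blockSwap_of_le (not_lt.1 h) (hsub.symm ▸ not_lt.1 h')]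

end ModCycles

section TrapTuple

/-- The 6-tuple `(r, r, s; a, 0, b)` of the definition of a trap. -/
abbrev trapTuple (r s a b : ℤ) : Tuple := ⟨r, r, s, a, 0, b⟩

/-- The vertex `(0, t)`, with `t` taken mod `n = 2l₀`. -/
def foreVtx (n t : ℤ) : ZMod 3 × ℤ := (0, t % n)

/-- The vertex `(2, −1 − t)`, with `t` taken mod `n = 2l₂`. -/
def backVtx (n t : ℤ) : ZMod 3 × ℤ := (2, (-1 - t) % n)

/-- The permutation of `ℤ/(r+s)` whose cycles correspond to the `{2, 3}`-orbits of
`(r, r, s; a, 0, b)`. -/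
def trapPerm (r s a b t : ℤ) : ℤ := blockSwap r (r + s) a t - (a + b)

/-- The label in `ℤ/(r+s)`, on representatives, of the `ι₂`-edge at a vertex of
`(r, r, s; a, 0, b)`. The `r` edges between the cycles `0` and `1` take the labels `[a, a + r)`,
already used by edges between the cycles `2` and `0`. -/
def orbitCoord (r a : ℤ) (v : ZMod 3 × ℤ) : ℤ :=
  if v.1 = 0 then if v.2 < r then v.2 + a else v.2
  else if v.1 = 1 then if v.2 < r then v.2 else r + r - 1 - v.2 + a
  else -1 - v.2

variable {r s a b n t x y : ℤ} {v w : ZMod 3 × ℤ}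

theorem foreVtx_congr (h : x ≡ y [ZMOD n]) : foreVtx n x = foreVtx n y :=
  congrArg (Prod.mk 0) h

theorem backVtx_congr (h : x ≡ y [ZMOD n]) : backVtx n x = backVtx n y :=
  congrArg (Prod.mk 2) (h.sub_left (-1))

theorem foreVtx_emod (n t : ℤ) : foreVtx n (t % n) = foreVtx n t :=
  foreVtx_congr (Int.mod_modEq t n)

theorem backVtx_emod (n t : ℤ) : backVtx n (t % n) = backVtx n t :=
  backVtx_congr (Int.mod_modEq t n)

theorem backVtx_of_lt (h₀ : 0 ≤ t) (h : t < n) : backVtx n t = (2, n - 1 - t) := by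
  have hneg : (-1 - t) % n = n - 1 - t := by
    rw [← Int.add_emod_right, Int.emod_eq_of_lt] <;> omega
  rw [backVtx, hneg]

theorem condI_trapTuple (hr : 0 < r) (hs : 0 < s) : CondI (trapTuple r s a b) :=
  forall_zmod_three.2 ⟨hr, hr, hs⟩

theorem backVtx_mem_vtx (hr : 0 < r) (hs : 0 < s) (t : ℤ) :
    backVtx (r + s) t ∈ Vtx (trapTuple r s a b) :=
  (condI_trapTuple hr hs).emod_mem_vtx 2 _

theorem rho_foreVtx (t : ℤ) :
    rho (trapTuple r s a b) (foreVtx (r + s) t) = foreVtx (r + s) (t + a) := by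
  change ((0 : ZMod 3), (t % (r + s) + a) % (s + r)) = (0, (t + a) % (r + s))
  rw [add_comm s r, Int.emod_add_emod]

theorem rho_backVtx (t : ℤ) :
    rho (trapTuple r s a b) (backVtx (r + s) t) = backVtx (r + s) (t - b) := by
  change ((2 : ZMod 3), ((-1 - t) % (r + s) + b) % (r + s)) = (2, (-1 - (t - b)) % (r + s))
  rw [Int.emod_add_emod, sub_sub_eq_add_sub, sub_add_eq_add_sub]

theorem rho_one (h₀ : 0 ≤ x) (h : x < r + r) : rho (trapTuple r s a b) (1, x) = (1, x) := by
  change ((1 : ZMod 3), (x + 0) % (r + r)) = (1, x)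
  rw [add_zero, Int.emod_eq_of_lt h₀ h]

theorem forall_edge_trapTuple_iff {Q : ZMod 3 × ℤ → ZMod 3 × ℤ → Prop} (hr : 0 < r) (hs : 0 < s) :
    (∀ i j, 0 ≤ j → j < (trapTuple r s a b).h i →
      Q (i, j) (i + 1, (trapTuple r s a b).twol (i + 1) - 1 - j)) ↔
    (∀ t, 0 ≤ t → t < r → Q (foreVtx (r + s) t) (1, r + r - 1 - t)) ∧
      (∀ t, 0 ≤ t → t < r → Q (1, t) (backVtx (r + s) t)) ∧
      ∀ t, r ≤ t → t < r + s → Q (backVtx (r + s) t) (foreVtx (r + s) t) := by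
  have fore_eq {t : ℤ} (h₀ : 0 ≤ t) (h : t < r + s) : foreVtx (r + s) t = (0, t) :=
    congrArg (Prod.mk 0) (Int.emod_eq_of_lt h₀ h)
  rw [forall_zmod_three]
  refine and_congr (forall₃_congr fun t h₀ h => ?_) (and_congr (forall₃_congr fun t h₀ h => ?_) ?_)
  · have h : t < r := h
    rw [fore_eq h₀ (by omega)]
    exact .rfl
  · have h : t < r := h
    rw [backVtx_of_lt h₀ (by omega)]
    exact .rfl
  · change (∀ j, 0 ≤ j → j < s → Q (2, j) (0, s + r - 1 - j)) ↔ _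
    refine ⟨fun hQ t h₀ h => ?_, fun hQ j h₀ h => ?_⟩
    · rw [fore_eq (by omega) h, backVtx_of_lt (by omega) h]
      convert hQ (r + s - 1 - t) (by omega) (by omega) using 2
      ring
    · have hj := hQ (r + s - 1 - j) (by omega) (by omega)
      rwa [fore_eq (by omega) (by omega), backVtx_of_lt (by omega) (by omega), sub_sub_cancel,
        add_comm r s] at hj

section Links

variable (hr : 0 < r) (hs : 0 < s)
include hr hs

theorem orbRel_foreVtx_one (h₀ : 0 ≤ t) (h : t < r) :
    OrbRel (trapTuple r s a b) {2, 3} (foreVtx (r + s) t) (1, r + r - 1 - t) :=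
  ((forall_edge_trapTuple_iff hr hs).1 fun _ _ => orbRel_edge (condI_trapTuple hr hs)).1 t h₀ h

theorem orbRel_one_backVtx (h₀ : 0 ≤ t) (h : t < r) :
    OrbRel (trapTuple r s a b) {2, 3} (1, t) (backVtx (r + s) t) :=
  ((forall_edge_trapTuple_iff hr hs).1 fun _ _ => orbRel_edge (condI_trapTuple hr hs)).2.1 t h₀ h

theorem orbRel_backVtx_foreVtx (h : r ≤ t % (r + s)) :
    OrbRel (trapTuple r s a b) {2, 3} (backVtx (r + s) t) (foreVtx (r + s) t) := by
  rw [← backVtx_emod, ← foreVtx_emod]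
  exact ((forall_edge_trapTuple_iff hr hs).1 fun _ _ => orbRel_edge (condI_trapTuple hr hs)).2.2 _ h
    (Int.emod_lt_of_pos t (add_pos hr hs))

theorem orbRel_rho_foreVtx_one (h₀ : 0 ≤ t) (h : t < r) :
    OrbRel (trapTuple r s a b) {2, 3} (foreVtx (r + s) (t + a)) (1, r + r - 1 - t) := by
  have hedge := ((forall_edge_trapTuple_iff (b := b)
    (Q := fun v w => OrbRel _ {2, 3} (rho _ v) (rho _ w)) hr hs).1 fun _ _ =>
      orbRel_rho_edge (condI_trapTuple (a := a) hr hs)).1 t h₀ h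
  rwa [rho_foreVtx, rho_one (by omega) (by omega)] at hedge

theorem orbRel_one_backVtx_sub (h₀ : 0 ≤ t) (h : t < r) :
    OrbRel (trapTuple r s a b) {2, 3} (1, t) (backVtx (r + s) (t - b)) := by
  have hedge := ((forall_edge_trapTuple_iff (b := b)
    (Q := fun v w => OrbRel _ {2, 3} (rho _ v) (rho _ w)) hr hs).1 fun _ _ =>
      orbRel_rho_edge (condI_trapTuple (a := a) hr hs)).2.1 t h₀ h
  rwa [rho_backVtx, rho_one (by omega) (by omega)] at hedge

theorem orbRel_backVtx_sub_foreVtx_add (h : r ≤ t % (r + s)) :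
    OrbRel (trapTuple r s a b) {2, 3} (backVtx (r + s) (t - b)) (foreVtx (r + s) (t + a)) := by
  have hedge := ((forall_edge_trapTuple_iff (b := b)
    (Q := fun v w => OrbRel _ {2, 3} (rho _ v) (rho _ w)) hr hs).1 fun _ _ =>
      orbRel_rho_edge (condI_trapTuple (a := a) hr hs)).2.2 (t % (r + s)) h
    (Int.emod_lt_of_pos t (add_pos hr hs))
  rwa [foreVtx_emod, backVtx_emod, rho_foreVtx, rho_backVtx] at hedge

theorem orbRel_foreVtx_foreVtx_add (h : t % (r + s) < r) :
    OrbRel (trapTuple r s a b) {2, 3} (foreVtx (r + s) t) (foreVtx (r + s) (t + a)) := by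
  have h₀ := Int.emod_nonneg t (add_pos hr hs).ne'
  rw [← foreVtx_emod, ← foreVtx_congr ((Int.mod_modEq t (r + s)).add_right a)]
  exact (orbRel_foreVtx_one hr hs h₀ h).trans _ _ _ (orbRel_rho_foreVtx_one hr hs h₀ h).symm

theorem orbRel_backVtx_backVtx_sub (h : t % (r + s) < r) :
    OrbRel (trapTuple r s a b) {2, 3} (backVtx (r + s) t) (backVtx (r + s) (t - b)) := by
  have h₀ := Int.emod_nonneg t (add_pos hr hs).ne'
  rw [← backVtx_emod, ← backVtx_congr ((Int.mod_modEq t (r + s)).sub_right b)]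
  exact (orbRel_one_backVtx hr hs h₀ h).symm.trans _ _ _ (orbRel_one_backVtx_sub hr hs h₀ h)

end Links

theorem orbitCoord_backVtx (r a n t : ℤ) : orbitCoord r a (backVtx n t) ≡ t [ZMOD n] := by
  change -1 - (-1 - t) % n ≡ t [ZMOD n]
  simpa only [sub_sub_cancel] using (Int.mod_modEq (-1 - t) n).sub_left (-1)

theorem orbitCoord_foreVtx_of_lt (h : t % n < r) :
    orbitCoord r a (foreVtx n t) ≡ t + a [ZMOD n] := by
  change (if t % n < r then t % n + a else t % n) ≡ t + a [ZMOD n]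
  rw [if_pos h]
  exact (Int.mod_modEq t n).add_right a

theorem orbitCoord_foreVtx_of_le (h : r ≤ t % n) :
    orbitCoord r a (foreVtx n t) ≡ t [ZMOD n] := by
  change (if t % n < r then t % n + a else t % n) ≡ t [ZMOD n]
  rw [if_neg h.not_gt]
  exact Int.mod_modEq t n

theorem orbitCoord_one_of_lt (h : x < r) : orbitCoord r a (1, x) = x := if_pos h

theorem orbitCoord_one_reflect (h : t < r) : orbitCoord r a (1, r + r - 1 - t) = t + a := by
  change (if r + r - 1 - t < r then r + r - 1 - t else r + r - 1 - (r + r - 1 - t) + a) = t + a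
  rw [if_neg (by omega), sub_sub_cancel]

theorem trapPerm_modEq (r s a b : ℤ) (h : x ≡ y [ZMOD r + s]) :
    trapPerm r s a b x ≡ trapPerm r s a b y [ZMOD r + s] :=
  (blockSwap_modEq r a h).sub_right (a + b)

theorem trapPerm_of_lt (h : t % (r + s) < r) : trapPerm r s a b t = t - b := by
  rw [trapPerm, blockSwap_of_lt h, ← sub_sub, add_sub_cancel_right]

theorem trapPerm_of_le (h : r ≤ t % (r + s)) (ha : r ≤ (t - a) % (r + s)) :
    trapPerm r s a b t = t - a - b := by
  rw [trapPerm, blockSwap_of_le h ha, sub_sub]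

section OrbitsOfTrapTuple

variable (hr : 0 < r) (hs : 0 < s)
include hr hs

theorem OrbRel.of_edges_trapTuple {E : ZMod 3 × ℤ → ZMod 3 × ℤ → Prop} (hE : Equivalence E)
    (h₀ : ∀ t, 0 ≤ t → t < r → E (foreVtx (r + s) t) (1, r + r - 1 - t))
    (h₁ : ∀ t, 0 ≤ t → t < r → E (1, t) (backVtx (r + s) t))
    (h₂ : ∀ t, r ≤ t → t < r + s → E (backVtx (r + s) t) (foreVtx (r + s) t))
    (hρ₀ : ∀ t, 0 ≤ t → t < r → E (foreVtx (r + s) (t + a)) (1, r + r - 1 - t))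
    (hρ₁ : ∀ t, 0 ≤ t → t < r → E (1, t) (backVtx (r + s) (t - b)))
    (hρ₂ : ∀ t, r ≤ t → t < r + s → E (backVtx (r + s) (t - b)) (foreVtx (r + s) (t + a)))
    (h : OrbRel (trapTuple r s a b) {2, 3} v w) : E v w := by
  refine h.of_edges (condI_trapTuple hr hs) hE
    ((forall_edge_trapTuple_iff hr hs).2 ⟨h₀, h₁, h₂⟩)
    ((forall_edge_trapTuple_iff
      (Q := fun v w => E (rho (trapTuple r s a b) v) (rho (trapTuple r s a b) w)) hr hs).2
      ⟨fun t ht₀ ht => ?_, fun t ht₀ ht => ?_, fun t hrt ht => ?_⟩)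
  · rw [rho_foreVtx, rho_one (by omega) (by omega)]
    exact hρ₀ t ht₀ ht
  · rw [rho_backVtx, rho_one ht₀ (by omega)]
    exact hρ₁ t ht₀ ht
  · rw [rho_backVtx, rho_foreVtx]
    exact hρ₂ t hrt ht

variable (hra : r ≤ a) (has : a ≤ s)
include hra has

theorem trapPerm_of_sub_lt (h : (t - a) % (r + s) < r) :
    trapPerm r s a b t = t - a - a - b := by
  rw [trapPerm, blockSwap_of_sub_lt hra (by omega) (add_pos hr hs) h, sub_sub (t - a)]

theorem trapPerm_orbitCoord_foreVtx_add (h : r ≤ t % (r + s)) :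
    trapPerm r s a b (orbitCoord r a (foreVtx (r + s) (t + a))) ≡ t - b [ZMOD r + s] := by
  rcases lt_or_ge ((t + a) % (r + s)) r with hta | hta
  · refine (trapPerm_modEq r s a b (orbitCoord_foreVtx_of_lt hta)).trans ?_
    rw [trapPerm_of_sub_lt hr hs hra has (by rwa [add_sub_cancel_right]), add_sub_cancel_right,
      add_sub_cancel_right]
  · refine (trapPerm_modEq r s a b (orbitCoord_foreVtx_of_le hta)).trans ?_
    rw [trapPerm_of_le hta (by rwa [add_sub_cancel_right]), add_sub_cancel_right]

theorem modCycleRel_orbitCoord_of_orbRel (h : OrbRel (trapTuple r s a b) {2, 3} v w) :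
    ModCycleRel (r + s) (trapPerm r s a b) (orbitCoord r a v) (orbitCoord r a w) := by
  have hn := add_pos hr hs
  have of_modEq {x y} (h : x ≡ y [ZMOD r + s]) : ModCycleRel (r + s) (trapPerm r s a b) x y :=
    .of_modEq (fun _ _ => trapPerm_modEq r s a b) h
  have emod_eq {t} (h₀ : 0 ≤ t) (h : t < r + s) : t % (r + s) = t := Int.emod_eq_of_lt h₀ h
  refine h.of_edges_trapTuple
    (E := fun v w => ModCycleRel _ (trapPerm r s a b) (orbitCoord r a v) (orbitCoord r a w)) hr hs
    ((ModCycleRel.equivalence _ _).comap _)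
    (fun t h₀ h => ?_) (fun t _ h => ?_) (fun t hrt h => ?_)
    (fun t h₀ h => ?_) (fun t h₀ h => ?_) (fun t hrt h => ?_)
  · rw [orbitCoord_one_reflect h]
    exact of_modEq (orbitCoord_foreVtx_of_lt (by rwa [emod_eq h₀ (by omega)]))
  · rw [orbitCoord_one_of_lt h]
    exact of_modEq (orbitCoord_backVtx r a _ t).symm
  · exact of_modEq ((orbitCoord_backVtx r a _ t).trans
      (orbitCoord_foreVtx_of_le (by rwa [emod_eq (by omega) h])).symm)
  · rw [orbitCoord_one_reflect h]
    exact of_modEq (orbitCoord_foreVtx_of_le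
      (le_add_emod hra (by omega) hn (by rwa [emod_eq h₀ (by omega)])))
  · rw [orbitCoord_one_of_lt h]
    refine .rel _ _ (.trans ?_ (orbitCoord_backVtx r a _ _).symm)
    rw [trapPerm_of_lt (by rwa [emod_eq h₀ (by omega)])]
  · refine .symm _ _ (.rel _ _ (.trans ?_ (orbitCoord_backVtx r a _ _).symm))
    exact trapPerm_orbitCoord_foreVtx_add hr hs hra has (by rwa [emod_eq (by omega) h])

theorem orbRel_foreVtx_backVtx_orbitCoord (t : ℤ) :
    OrbRel (trapTuple r s a b) {2, 3} (foreVtx (r + s) t)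
      (backVtx (r + s) (orbitCoord r a (foreVtx (r + s) t))) := by
  rcases lt_or_ge (t % (r + s)) r with h | h
  · rw [backVtx_congr (orbitCoord_foreVtx_of_lt h)]
    exact (orbRel_foreVtx_foreVtx_add hr hs h).trans _ _ _
      (orbRel_backVtx_foreVtx hr hs (le_add_emod hra (by omega) (add_pos hr hs) h)).symm
  · rw [backVtx_congr (orbitCoord_foreVtx_of_le h)]
    exact (orbRel_backVtx_foreVtx hr hs h).symm

theorem orbRel_one_backVtx_orbitCoord (hx₀ : 0 ≤ x) (hx : x < r + r) :
    OrbRel (trapTuple r s a b) {2, 3} (1, x) (backVtx (r + s) (orbitCoord r a (1, x))) := by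
  rcases lt_or_ge x r with h | h
  · rw [orbitCoord_one_of_lt h]
    exact orbRel_one_backVtx hr hs hx₀ h
  · obtain ⟨t, rfl⟩ : ∃ t, x = r + r - 1 - t := ⟨r + r - 1 - x, by ring⟩
    have ht : t % (r + s) = t := Int.emod_eq_of_lt (by omega) (by omega)
    have hfore := orbRel_foreVtx_backVtx_orbitCoord (b := b) hr hs hra has t
    rw [backVtx_congr (orbitCoord_foreVtx_of_lt (by omega))] at hfore
    rw [orbitCoord_one_reflect (by omega)]
    exact (orbRel_foreVtx_one hr hs (by omega) (by omega)).symm.trans _ _ _ hfore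

theorem orbRel_backVtx_orbitCoord (hv : v ∈ Vtx (trapTuple r s a b)) :
    OrbRel (trapTuple r s a b) {2, 3} v (backVtx (r + s) (orbitCoord r a v)) := by
  obtain ⟨i, x⟩ := v
  refine forall_zmod_three (p := fun i => ∀ x, (i, x) ∈ Vtx (trapTuple r s a b) →
    OrbRel (trapTuple r s a b) {2, 3} (i, x) (backVtx (r + s) (orbitCoord r a (i, x)))).2
    ⟨fun x hx => ?_, fun x hx => ?_, fun x hx => ?_⟩ i x hv
  · have hfore := orbRel_foreVtx_backVtx_orbitCoord (b := b) hr hs hra has x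
    rwa [show foreVtx (r + s) x = (0, x) from
      congrArg (Prod.mk 0) (Int.emod_eq_of_lt hx.1 (hx.2.trans_eq (add_comm s r)))] at hfore
  · exact orbRel_one_backVtx_orbitCoord hr hs hra has hx.1 hx.2
  · have hx' : x % (r + s) = x := Int.emod_eq_of_lt hx.1 hx.2
    have hback : backVtx (r + s) (-1 - x) = (2, x) := by rw [backVtx, sub_sub_cancel, hx']
    change OrbRel _ _ _ (backVtx (r + s) (-1 - x))
    rw [hback]
    exact .refl _

theorem orbRel_backVtx_trapPerm (t : ℤ) :
    OrbRel (trapTuple r s a b) {2, 3} (backVtx (r + s) t)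
      (backVtx (r + s) (trapPerm r s a b t)) := by
  rcases lt_or_ge (t % (r + s)) r with ht | ht
  · rw [trapPerm_of_lt ht]
    exact orbRel_backVtx_backVtx_sub hr hs ht
  have hfore := orbRel_backVtx_foreVtx (a := a) (b := b) hr hs ht
  rcases lt_or_ge ((t - a) % (r + s)) r with hta | hta
  · have hswap := orbRel_foreVtx_foreVtx_add (a := a) (b := b) hr hs hta
    have hback := orbRel_backVtx_sub_foreVtx_add (a := a) (b := b) (t := t - a - a) hr hs
      (le_sub_emod hra (by omega) (add_pos hr hs) hta)
    rw [sub_add_cancel] at hswap hback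
    rw [trapPerm_of_sub_lt hr hs hra has hta]
    exact (hfore.trans _ _ _ hswap.symm).trans _ _ _ hback.symm
  · have hback := orbRel_backVtx_sub_foreVtx_add (a := a) (b := b) hr hs hta
    rw [sub_add_cancel] at hback
    rw [trapPerm_of_le ht hta]
    exact hfore.trans _ _ _ hback.symm

theorem orbRel_backVtx_of_modCycleRel (h : ModCycleRel (r + s) (trapPerm r s a b) x y) :
    OrbRel (trapTuple r s a b) {2, 3} (backVtx (r + s) x) (backVtx (r + s) y) := by
  have hequiv : Equivalence (OrbRel (trapTuple r s a b) {2, 3}) := Relation.EqvGen.is_equivalence _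
  refine (hequiv.comap (backVtx (r + s))).eqvGen_iff.1 (Relation.EqvGen.mono ?_ _ _ h)
  intro x y hxy
  change OrbRel _ _ _ _
  rw [← backVtx_congr hxy]
  exact orbRel_backVtx_trapPerm hr hs hra has x

theorem orbRel_trapTuple_iff (hv : v ∈ Vtx (trapTuple r s a b))
    (hw : w ∈ Vtx (trapTuple r s a b)) : OrbRel (trapTuple r s a b) {2, 3} v w ↔
      ModCycleRel (r + s) (trapPerm r s a b) (orbitCoord r a v) (orbitCoord r a w) := by
  refine ⟨modCycleRel_orbitCoord_of_orbRel hr hs hra has, fun h => ?_⟩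
  exact ((orbRel_backVtx_orbitCoord hr hs hra has hv).trans _ _ _
    (orbRel_backVtx_of_modCycleRel hr hs hra has h)).trans _ _ _
      (orbRel_backVtx_orbitCoord hr hs hra has hw).symm

theorem orbRel_backVtx_iff : OrbRel (trapTuple r s a b) {2, 3} (backVtx (r + s) x)
    (backVtx (r + s) y) ↔ ModCycleRel (r + s) (trapPerm r s a b) x y := by
  have of_modEq {x y} (h : x ≡ y [ZMOD r + s]) : ModCycleRel (r + s) (trapPerm r s a b) x y :=
    .of_modEq (fun _ _ => trapPerm_modEq r s a b) h
  refine ⟨fun h => ?_, orbRel_backVtx_of_modCycleRel hr hs hra has⟩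
  exact ((of_modEq (orbitCoord_backVtx r a _ x).symm).trans _ _ _
    (modCycleRel_orbitCoord_of_orbRel hr hs hra has h)).trans _ _ _
      (of_modEq (orbitCoord_backVtx r a _ y))

theorem trapPerm_reflect {b' : ℤ} (hb : r + s - a + b' ≡ a + b [ZMOD r + s]) (t : ℤ) :
    trapPerm r s (r + s - a) b' (t - a) ≡ trapPerm r s a b t - a [ZMOD r + s] := by
  have hswap := (blockSwap_sub hra (by omega) (add_pos hr hs) t).sub hb
  rwa [sub_right_comm] at hswap

theorem ThreeOrbits.trapTuple_reflect {b' : ℤ} (hb : r + s - a + b' ≡ a + b [ZMOD r + s])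
    (h : ThreeOrbits (trapTuple r s a b) {2, 3}) :
    ThreeOrbits (trapTuple r s (r + s - a) b') {2, 3} := by
  have hiff : ∀ v ∈ Vtx (trapTuple r s a b), ∀ w ∈ Vtx (trapTuple r s a b),
      OrbRel (trapTuple r s (r + s - a) b') {2, 3} (backVtx (r + s) (orbitCoord r a v - a))
        (backVtx (r + s) (orbitCoord r a w - a)) ↔ OrbRel (trapTuple r s a b) {2, 3} v w :=
    fun v hv w hw => by
      rw [orbRel_backVtx_iff hr hs (by omega) (by omega), orbRel_trapTuple_iff hr hs hra has hv hw,
        modCycleRel_sub_right_iff (trapPerm_reflect hr hs hra has hb)]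
  refine h.map (fun v => backVtx (r + s) (orbitCoord r a v - a))
    (fun v _ => backVtx_mem_vtx hr hs _) (fun v hv w hw => (hiff v hv w hw).1)
    (fun v hv w hw => (hiff v hv w hw).2) fun w hw => ?_
  refine ⟨backVtx (r + s) (orbitCoord r (r + s - a) w + a), backVtx_mem_vtx hr hs _, ?_⟩
  rw [backVtx_congr ((orbitCoord_backVtx r a _ _).sub_right a), add_sub_cancel_right]
  exact (orbRel_backVtx_orbitCoord hr hs (by omega) (by omega) hw).symm

end OrbitsOfTrapTuple

theorem Admissible.trapTuple_reflect (hr : 0 < r) (hra : r ≤ a) (has : a ≤ s)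
    (h : Admissible (trapTuple r s a b)) :
    Admissible (trapTuple r s (r + s - a) ((2 * a + b) % (r + s))) := by
  have hs : 0 < s := by omega
  have hn := add_pos hr hs
  obtain ⟨-, hparity, hq, hqparity, hodd⟩ := (condsI_IV_and_condV_iff _).1 ⟨h.1, h.2.1⟩
  simp only at hparity hq hqparity hodd
  have hb₀ := Int.emod_nonneg (2 * a + b) hn.ne'
  have hb₁ := Int.emod_lt_of_pos (2 * a + b) hn
  have hb₂ := Int.emod_emod_of_dvd (2 * a + b) (show (2 : ℤ) ∣ r + s by omega)
  have hb : r + s - a + (2 * a + b) % (r + s) ≡ a + b [ZMOD r + s] :=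
    ((Int.mod_modEq _ _).add_left _).trans (Int.modEq_iff_dvd.2 ⟨-1, by ring⟩)
  have hc : CondsI_IV (trapTuple r s (r + s - a) ((2 * a + b) % (r + s))) ∧
      CondV (trapTuple r s (r + s - a) ((2 * a + b) % (r + s))) := by
    rw [condsI_IV_and_condV_iff]
    refine ⟨⟨hr, hr, hs⟩, ⟨rfl, hparity.2⟩, ⟨⟨?_, ?_⟩, ⟨?_, ?_⟩, ?_, ?_⟩, ⟨?_, ?_⟩, ?_⟩ <;>
      simp only <;> omega
  exact ⟨hc.1, hc.2, h.2.2.trapTuple_reflect hr hs hra has hb⟩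

end TrapTuple

theorem psi3_psi1 (f : Tuple) : psi3 (psi1 f) = psi1 (psi3 f) := rfl

theorem psi3_psi2 (f : Tuple) : psi3 (psi2 f) = psi2 (psi3 f) := by
  simp only [psi2, psi3, add_comm]

theorem neg_neg_emod_emod {x n : ℤ} (h₀ : 0 ≤ x) (h : x < n) : -(-x % n) % n = x := by
  have hmod : -(-x % n) ≡ x [ZMOD n] := by simpa only [neg_neg] using (Int.mod_modEq (-x) n).neg
  exact Eq.trans hmod (Int.emod_eq_of_lt h₀ h)

theorem psi3_psi3 {f : Tuple} (h : CondIII f) : psi3 (psi3 f) = f := by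
  have h₀ : -(-f.q0 % (f.h2 + f.h0)) % (f.h2 + f.h0) = f.q0 := neg_neg_emod_emod (h 0).1 (h 0).2
  have h₁ : -(-f.q1 % (f.h0 + f.h1)) % (f.h0 + f.h1) = f.q1 := neg_neg_emod_emod (h 1).1 (h 1).2
  have h₂ : -(-f.q2 % (f.h1 + f.h2)) % (f.h1 + f.h2) = f.q2 := neg_neg_emod_emod (h 2).1 (h 2).2
  simp only [psi3, h₀, h₁, h₂]

theorem sigma_of_q0_eq_zero {f : Tuple} (h : f.q0 = 0) : sigma f = f := if_pos h

theorem sigma_psi2 {f : Tuple} (h0 : f.q0 ≠ f.h0) (h2 : f.q0 ≠ f.h2) :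
    sigma (psi2 f) = psi2 (sigma f) := by
  have hh0 : (psi2 f).h0 = f.h2 := rfl
  have hh2 : (psi2 f).h2 = f.h0 := rfl
  have hq0 : (psi2 f).q0 = f.q0 := rfl
  rw [sigma, sigma]
  split_ifs
  all_goals first
    | rfl
    | exfalso; omega
    | simp only [psi2, add_comm, add_left_comm]

/-- The condition on `(q₀, q₂) = (a, b)` in the definition of a trap: the coset `a + ℤ(a + b)`
reduces mod `r + s` into `{0, r + 1, …, s − 1}`. -/
def TrapPair (r s a b : ℤ) : Prop := ∀ k : ℤ, inT r s ((a + k * (a + b)) % (r + s))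

section Traps

variable {r s a b a' b' : ℤ} {f g : Tuple}

theorem inT_neg_emod {x : ℤ} (hr : 0 < r) (h : inT r s (x % (r + s))) :
    inT r s (-x % (r + s)) := by
  have hneg : -x ≡ -(x % (r + s)) [ZMOD r + s] := (Int.mod_modEq x (r + s)).neg.symm
  rcases h with h | ⟨h₁, h₂⟩
  · rw [hneg, h]
    exact .inl rfl
  · rw [hneg, ← Int.add_emod_right, Int.emod_eq_of_lt (by omega) (by omega)]
    exact .inr (by omega)

theorem TrapPair.congr (ha : a ≡ a' [ZMOD r + s]) (hb : b ≡ b' [ZMOD r + s])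
    (h : TrapPair r s a b) : TrapPair r s a' b' := fun k => by
  have hk : a + k * (a + b) ≡ a' + k * (a' + b') [ZMOD r + s] := ha.add ((ha.add hb).mul_left k)
  exact hk ▸ h k

theorem TrapPair.neg (hr : 0 < r) (h : TrapPair r s a b) : TrapPair r s (-a) (-b) := fun k => by
  convert inT_neg_emod hr (h k) using 2
  ring

theorem TrapPair.swap (hr : 0 < r) (h : TrapPair r s a b) : TrapPair r s b a := fun k => by
  convert inT_neg_emod hr (h (-k - 1)) using 2
  ring

theorem TrapPair.reflect (hr : 0 < r) (h : TrapPair r s a b) : TrapPair r s (-a) (2 * a + b) :=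
  fun k => by
    convert inT_neg_emod hr (h (-k)) using 2
    ring

theorem trapPair_iff_forall_nat (hr : 0 < r) (hs : 0 < s) : TrapPair r s a b ↔
    ∀ k : ℕ, inT r s ((a + k * (a + b)) % (r + s)) ∧ inT r s ((b + k * (a + b)) % (r + s)) := by
  refine ⟨fun h k => ⟨h k, add_comm a b ▸ h.swap hr k⟩, fun h k => ?_⟩
  lift k % (r + s) to ℕ using Int.emod_nonneg k (add_pos hr hs).ne' with m hm
  have hk : a + m * (a + b) ≡ a + k * (a + b) [ZMOD r + s] := by
    rw [hm]
    exact ((Int.mod_modEq k (r + s)).mul_right _).add_left a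
  exact hk ▸ (h m).1

theorem TrapPair.eq_zero_or (h : TrapPair r s a b) (ha₀ : 0 ≤ a) (ha : a < r + s) :
    a = 0 ∨ r < a ∧ a < s := by
  simpa only [inT, zero_mul, add_zero, Int.emod_eq_of_lt ha₀ ha] using h 0

/-- The tuples in the `H`-orbits of the trap tuples `(r, r, s; a, 0, b)`. -/
def TrapShape (r s : ℤ) (f : Tuple) : Prop :=
  ∃ a b, TrapPair r s a b ∧
    (f = trapTuple r s a b ∨ f = psi1 (trapTuple r s a b) ∨ f = psi2 (trapTuple r s a b))

theorem TrapShape.psi1 (hr : 0 < r) (h : TrapShape r s f) : TrapShape r s (psi1 f) := by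
  obtain ⟨a, b, hab, rfl | rfl | rfl⟩ := h
  exacts [⟨a, b, hab, .inr (.inl rfl)⟩, ⟨b, a, hab.swap hr, .inr (.inr rfl)⟩,
    ⟨b, a, hab.swap hr, .inl rfl⟩]

theorem TrapShape.psi2 (hr : 0 < r) (h : TrapShape r s f) : TrapShape r s (psi2 f) := by
  obtain ⟨a, b, hab, rfl | rfl | rfl⟩ := h
  exacts [⟨a, b, hab, .inr (.inr rfl)⟩, ⟨b, a, hab.swap hr, .inr (.inl rfl)⟩,
    ⟨a, b, hab, .inl rfl⟩]

theorem psi3_trapTuple (r s a b : ℤ) :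
    psi3 (trapTuple r s a b) = trapTuple r s (-a % (r + s)) (-b % (r + s)) := by
  simp only [psi3, neg_zero, Int.zero_emod, add_comm s r]

theorem TrapShape.psi3 (hr : 0 < r) (h : TrapShape r s f) : TrapShape r s (psi3 f) := by
  obtain ⟨a, b, hab, hf⟩ := h
  refine ⟨_, _, (hab.neg hr).congr (Int.mod_modEq _ _).symm (Int.mod_modEq _ _).symm, ?_⟩
  rw [← psi3_trapTuple, ← psi3_psi1, ← psi3_psi2]
  exact hf.imp (congrArg _) (Or.imp (congrArg _) (congrArg _))

theorem trapShape_iff_of_hEquiv (hr : 0 < r) (h : HEquiv f g) :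
    TrapShape r s f ↔ TrapShape r s g := by
  have hequiv : Equivalence fun f g => TrapShape r s f ↔ TrapShape r s g :=
    ⟨fun _ => .rfl, Iff.symm, Iff.trans⟩
  refine hequiv.eqvGen_iff.1 (Relation.EqvGen.mono ?_ _ _ h)
  rintro x _ ⟨hx, -, rfl | rfl | rfl⟩
  · exact ⟨.psi1 hr, fun h => (h.psi1 hr).psi1 hr⟩
  · exact ⟨.psi2 hr, .psi2 hr⟩
  · exact ⟨.psi3 hr, fun h => psi3_psi3 hx.1.2.2.1 ▸ h.psi3 hr⟩

theorem IsTrapOfType.trapShape (hr : 0 < r) (hs : 0 < s) (h : IsTrapOfType r s f) :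
    TrapShape r s f := by
  obtain ⟨⟨h0, h1, h2, a, q1, b⟩, -, hfg, hh0, hh1, hh2, hq1, hk⟩ := h
  obtain ⟨rfl, rfl, rfl, rfl⟩ : h0 = r ∧ h1 = r ∧ h2 = s ∧ q1 = 0 := ⟨hh0, hh1, hh2, hq1⟩
  exact (trapShape_iff_of_hEquiv hr hfg).2 ⟨a, b, (trapPair_iff_forall_nat hr hs).2 hk, .inl rfl⟩

theorem TrapPair.isTrapOfType (hr : 0 < r) (hs : 0 < s) (h : TrapPair r s a b)
    (hg : Admissible (trapTuple r s a b)) : IsTrapOfType r s (trapTuple r s a b) :=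
  ⟨_, hg, .refl _, rfl, rfl, rfl, rfl, (trapPair_iff_forall_nat hr hs).1 h⟩

theorem IsTrapOfType.psi2 (hf : Admissible f) (h : IsTrapOfType r s f) :
    IsTrapOfType r s (psi2 f) := by
  obtain ⟨g, hg, hfg, htrap⟩ := h
  exact ⟨g, hg, .trans _ _ _ (.symm _ _ (.rel _ _ ⟨hf, hf.psi2, .inr (.inl rfl)⟩)) hfg, htrap⟩

theorem sigma_trapTuple (hr : 0 < r) (hra : r < a) (has : a < s) :
    sigma (trapTuple r s a b) = trapTuple r s (r + s - a) ((2 * a + b) % (r + s)) := by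
  rw [sigma, if_neg (by simp only; omega), if_neg (by simp only; omega),
    if_neg (by simp only; omega), if_pos has]
  simp only [add_sub_cancel_left, add_sub_cancel_right, Int.zero_emod]
  rw [Int.emod_eq_of_lt (by omega) (by omega)]

theorem TrapPair.exists_sigma_trapTuple_eq (hr : 0 < r) (h : TrapPair r s a b)
    (hf : Admissible (trapTuple r s a b)) :
    ∃ a' b', sigma (trapTuple r s a b) = trapTuple r s a' b' ∧
      TrapPair r s a' b' ∧ Admissible (trapTuple r s a' b') := by
  have ha : 0 ≤ a ∧ a < s + r := hf.1.2.2.1 0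
  rcases h.eq_zero_or ha.1 (ha.2.trans_eq (add_comm s r)) with rfl | ⟨hra, has⟩
  · exact ⟨0, b, sigma_of_q0_eq_zero rfl, h, hf⟩
  · exact ⟨r + s - a, (2 * a + b) % (r + s), sigma_trapTuple hr hra has,
      (h.reflect hr).congr (Int.modEq_iff_dvd.2 ⟨1, by ring⟩) (Int.mod_modEq _ _).symm,
      hf.trapTuple_reflect hr hra.le has.le⟩

theorem Admissible.q0_ne_h0 (hf : Admissible f) : f.q0 ≠ f.h0 := by
  have hodd : (f.h0 + f.q0) % 2 = 1 := hf.2.1 0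
  omega

theorem Admissible.q0_ne_h2 (hf : Admissible f) : f.q0 ≠ f.h2 := by
  have hodd : (f.h0 + f.q0) % 2 = 1 := hf.2.1 0
  have hparity : f.h0 % 2 = f.h2 % 2 := hf.1.2.1 0 2
  omega

end Traps

/-- if `f` is a trap of type `(r,s)`, then so is `σ(f)`. -/
theorem stmt_13 (r s : ℤ) (hr : 0 < r) (hrs : r ≤ s) (f : Tuple)
    (hf : Admissible f) (ht : IsTrapOfType r s f) :
    IsTrapOfType r s (sigma f) := by
  have hs : 0 < s := hr.trans_le hrs
  obtain ⟨a, b, hab, rfl | rfl | rfl⟩ := ht.trapShape hr hs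
  · obtain ⟨a', b', hsigma, hab', hg'⟩ := hab.exists_sigma_trapTuple_eq hr hf
    exact hsigma ▸ hab'.isTrapOfType hr hs hg'
  · rwa [sigma_of_q0_eq_zero rfl]
  · have hg : Admissible (trapTuple r s a b) := hf.psi2
    obtain ⟨a', b', hsigma, hab', hg'⟩ := hab.exists_sigma_trapTuple_eq hr hg
    rw [sigma_psi2 hg.q0_ne_h0 hg.q0_ne_h2, hsigma]
    exact (hab'.isTrapOfType hr hs hg').psi2 hg'
end GMN
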